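/- (SLLN for the RWG in the degenerate case p = 0.) Suppose p = 0. Then almost surely S_n/n converges to μ + ρ as n → ∞, and moreover almost surely ‖S_n/n − μ − ρ‖² = O((log n)/n). -/

import Mathlib

open MeasureTheory ProbabilityTheory Real Filter Set
open scoped BigOperators NNReal

noncomputable section

namespace RWG

abbrev E : Type := EuclideanSpace ℝ (Fin 3)

def vec (x y z : ℝ) : E := (EuclideanSpace.equiv (Fin 3) ℝ).symm ![x, y, z]

/-- The four families of vertices of the `2h` graphite lattice. -/
def V (a h : ℝ) (i j : Fin 2) : Set E :=
  {v | ∃ k l n : ℤ, v =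
    vec (a * ((-1 : ℝ) ^ ((i : ℕ) + 1) * (if j = 1 then (1 : ℝ) else 0) + (3 / 2) * k))
        (a * ((Real.sqrt 3 / 2) * k + Real.sqrt 3 * l))
        (h * (2 * n + (if i ≠ j then (1 : ℝ) else 0)))}

/-- Horizontal jump from a vertex of horizontal type `i` in direction `k`. -/
def w (a : ℝ) (i : Fin 2) (k : Fin 3) : E :=
  vec (a * Real.cos (2 * (k : ℕ) * π / 3 + (i : ℕ) * π))
      (a * Real.sin (2 * (k : ℕ) * π / 3 + (i : ℕ) * π)) 0

/-- `S` is a random walk on graphite with parameters `a, h, p, α, q` and natural filtration `F`. -/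
structure IsRWG {Ω : Type} [MeasurableSpace Ω] (P : Measure Ω)
    (a h p α : ℝ) (q : Fin 2 → Fin 2 → Fin 3 → ℝ)
    (S : ℕ → Ω → E) (F : ℕ → MeasurableSpace Ω) : Prop where
  prob : IsProbabilityMeasure P
  ha : 0 < a
  hh : 0 < h
  hp0 : 0 ≤ p
  hp1 : p ≤ 1
  hα0 : 0 < α
  hα1 : α < 1
  hq : ∀ i j k, 0 ≤ q i j k
  hqsum0 : ∀ i, q i 0 0 + q i 0 1 + q i 0 2 = 1 - p
  hqsum1 : ∀ i, q i 1 0 + q i 1 1 + q i 1 2 = 1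
  hS0 : ∀ ω, S 0 ω = 0
  hSmeas : ∀ n, Measurable (S n)
  hF : ∀ n, F n =
    MeasurableSpace.comap (fun ω (k : Fin n) => S ((k : ℕ) + 1) ω - S (k : ℕ) ω)
      MeasurableSpace.pi
  hTrans : ∀ (n : ℕ) (f : E → ℝ), Measurable f → (∃ C, ∀ x, |f x| ≤ C) →
    P[fun ω => f (S (n + 1) ω)|F n] =ᵐ[P]
      fun ω => ∑ i : Fin 2,
        ((V a h i 0).indicator (fun _ => (1 : ℝ)) (S n ω) *
          (α * p * f (S n ω + vec 0 0 h) + (1 - α) * p * f (S n ω + vec 0 0 (-h)) +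
            ∑ k : Fin 3, q i 0 k * f (S n ω + w a i k)) +
        (V a h i 1).indicator (fun _ => (1 : ℝ)) (S n ω) *
          ∑ k : Fin 3, q i 1 k * f (S n ω + w a i k))

def uu (q : Fin 2 → Fin 2 → Fin 3 → ℝ) (i j : Fin 2) : ℝ := q i j 1 + q i j 2

def vv (q : Fin 2 → Fin 2 → Fin 3 → ℝ) (i j : Fin 2) : ℝ := q i j 1 - q i j 2

def ss (q : Fin 2 → Fin 2 → Fin 3 → ℝ) (i j : Fin 2) : ℝ := uu q i j * (1 - uu q i j)

def tt (q : Fin 2 → Fin 2 → Fin 3 → ℝ) (i j : Fin 2) : ℝ := vv q i j * (uu q i j - 1)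

/-- The vector `μ` of the RWG. -/
def muG (a h p α : ℝ) (q : Fin 2 → Fin 2 → Fin 3 → ℝ) : E :=
  vec (3 * a / 8 * (-(uu q 0 0 + uu q 0 1) + (uu q 1 0 + uu q 1 1)))
      (a * Real.sqrt 3 / 8 * ((vv q 0 0 + vv q 0 1) - (vv q 1 0 + vv q 1 1)))
      (h * p / 2 * (2 * α - 1))

/-- The vector `m` of the RWG. -/
def mG (a h p α : ℝ) (q : Fin 2 → Fin 2 → Fin 3 → ℝ) : E :=
  vec (3 * a / 8 * (-(uu q 0 0 - uu q 0 1) + (uu q 1 0 - uu q 1 1)))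
      (a * Real.sqrt 3 / 8 * ((vv q 0 0 - vv q 0 1) - (vv q 1 0 - vv q 1 1)))
      (h * p / 2 * (2 * α - 1))

/-- The vector `θ` of the RWG. -/
def thetaG (a p : ℝ) (q : Fin 2 → Fin 2 → Fin 3 → ℝ) : E :=
  vec (a * ((1 - p / 2) - 3 / 8 * ((uu q 0 0 + uu q 0 1) + (uu q 1 0 + uu q 1 1))))
      (a * Real.sqrt 3 / 8 * ((vv q 0 0 + vv q 0 1) + (vv q 1 0 + vv q 1 1))) 0

/-- The vector `ρ` of the RWG. -/
def rhoG (a p : ℝ) (q : Fin 2 → Fin 2 → Fin 3 → ℝ) : E :=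
  vec (a * (-(p / 2) - 3 / 8 * ((uu q 0 0 - uu q 0 1) + (uu q 1 0 - uu q 1 1))))
      (a * Real.sqrt 3 / 8 * ((vv q 0 0 - vv q 0 1) + (vv q 1 0 - vv q 1 1))) 0

/-- The vector `ζ = (0, 0, hp(2α−1))`. -/
def zetaG (h p α : ℝ) : E := vec 0 0 (h * p * (2 * α - 1))

/-- The indicator process `i_n`. -/
def iP {Ω : Type} (a h : ℝ) (S : ℕ → Ω → E) (n : ℕ) (ω : Ω) : ℝ :=
  (V a h 0 0 ∪ V a h 0 1).indicator (fun _ => (1 : ℝ)) (S n ω) -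
    (V a h 1 0 ∪ V a h 1 1).indicator (fun _ => (1 : ℝ)) (S n ω)

/-- The indicator process `j_n`. -/
def jP {Ω : Type} (a h : ℝ) (S : ℕ → Ω → E) (n : ℕ) (ω : Ω) : ℝ :=
  (V a h 0 0 ∪ V a h 1 0).indicator (fun _ => (1 : ℝ)) (S n ω) -
    (V a h 0 1 ∪ V a h 1 1).indicator (fun _ => (1 : ℝ)) (S n ω)

/-- The indicator process `k_n`. -/
def kP {Ω : Type} (a h : ℝ) (S : ℕ → Ω → E) (n : ℕ) (ω : Ω) : ℝ :=
  (V a h 0 0 ∪ V a h 1 1).indicator (fun _ => (1 : ℝ)) (S n ω) -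
    (V a h 0 1 ∪ V a h 1 0).indicator (fun _ => (1 : ℝ)) (S n ω)

/-- The matrix `σ²` of the RWG. -/
def sigmaG (a h p α : ℝ) (q : Fin 2 → Fin 2 → Fin 3 → ℝ) : Matrix (Fin 3) (Fin 3) ℝ :=
  !![a ^ 2 / 4 * (2 * p * (1 - p) + 9 / 4 * (ss q 0 0 + ss q 1 0 + ss q 0 1 + ss q 1 1)
        - 3 * p * (uu q 0 0 + uu q 1 0)),
     a ^ 2 * Real.sqrt 3 / 16 * (3 * (tt q 0 0 + tt q 1 0 + tt q 0 1 + tt q 1 1)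
        + 2 * p * (vv q 0 0 + vv q 1 0)),
     a * h / 8 * (-4 * p * (1 - p) * (2 * α - 1)
        + 3 * p * (2 * α - 1) * (uu q 0 0 + uu q 1 0));
     a ^ 2 * Real.sqrt 3 / 16 * (3 * (tt q 0 0 + tt q 1 0 + tt q 0 1 + tt q 1 1)
        + 2 * p * (vv q 0 0 + vv q 1 0)),
     3 * a ^ 2 / 16 * ((uu q 0 0 + uu q 1 0 + uu q 0 1 + uu q 1 1)
        - ((vv q 0 0) ^ 2 + (vv q 1 0) ^ 2 + (vv q 0 1) ^ 2 + (vv q 1 1) ^ 2)),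
     -(a * h * Real.sqrt 3 / 8) * (p * (2 * α - 1) * (vv q 0 0 + vv q 1 0));
     a * h / 8 * (-4 * p * (1 - p) * (2 * α - 1)
        + 3 * p * (2 * α - 1) * (uu q 0 0 + uu q 1 0)),
     -(a * h * Real.sqrt 3 / 8) * (p * (2 * α - 1) * (vv q 0 0 + vv q 1 0)),
     h ^ 2 * p / 2 * (1 - p * (2 * α - 1) ^ 2)]

/-- The matrix `γ` of the RWG. -/
def gammaG (a h p α : ℝ) (q : Fin 2 → Fin 2 → Fin 3 → ℝ) : Matrix (Fin 3) (Fin 3) ℝ :=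
  !![a ^ 2 / 4 * (2 * p * (1 - p) + 9 / 4 * (ss q 0 0 + ss q 1 0 - ss q 0 1 - ss q 1 1)
        - 3 * p * (uu q 0 0 + uu q 1 0)),
     a ^ 2 * Real.sqrt 3 / 16 * (3 * (tt q 0 0 + tt q 1 0 - tt q 0 1 - tt q 1 1)
        + 2 * p * (vv q 0 0 + vv q 1 0)),
     a * h / 8 * (-4 * p * (1 - p) * (2 * α - 1)
        + 3 * p * (2 * α - 1) * (uu q 0 0 + uu q 1 0));
     a ^ 2 * Real.sqrt 3 / 16 * (3 * (tt q 0 0 + tt q 1 0 - tt q 0 1 - tt q 1 1)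
        + 2 * p * (vv q 0 0 + vv q 1 0)),
     3 * a ^ 2 / 16 * ((uu q 0 0 + uu q 1 0 - uu q 0 1 - uu q 1 1)
        - ((vv q 0 0) ^ 2 + (vv q 1 0) ^ 2 - (vv q 0 1) ^ 2 - (vv q 1 1) ^ 2)),
     -(a * h * Real.sqrt 3 / 8) * (p * (2 * α - 1) * (vv q 0 0 + vv q 1 0));
     a * h / 8 * (-4 * p * (1 - p) * (2 * α - 1)
        + 3 * p * (2 * α - 1) * (uu q 0 0 + uu q 1 0)),
     -(a * h * Real.sqrt 3 / 8) * (p * (2 * α - 1) * (vv q 0 0 + vv q 1 0)),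
     h ^ 2 * p / 2 * (1 - p * (2 * α - 1) ^ 2)]

/-- The matrix `δ` of the RWG. -/
def deltaG (a h p α : ℝ) (q : Fin 2 → Fin 2 → Fin 3 → ℝ) : Matrix (Fin 3) (Fin 3) ℝ :=
  !![a ^ 2 / 4 * (9 / 4 * (ss q 0 0 - ss q 1 0 - ss q 0 1 + ss q 1 1)
        - 3 * p * (uu q 0 0 - uu q 1 0)),
     a ^ 2 * Real.sqrt 3 / 16 * (3 * (tt q 0 0 - tt q 1 0 - tt q 0 1 + tt q 1 1)
        + 2 * p * (vv q 0 0 - vv q 1 0)),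
     a * h / 8 * (3 * p * (2 * α - 1) * (uu q 0 0 - uu q 1 0));
     a ^ 2 * Real.sqrt 3 / 16 * (3 * (tt q 0 0 - tt q 1 0 - tt q 0 1 + tt q 1 1)
        + 2 * p * (vv q 0 0 - vv q 1 0)),
     3 * a ^ 2 / 16 * ((uu q 0 0 - uu q 1 0 - uu q 0 1 + uu q 1 1)
        - ((vv q 0 0) ^ 2 - (vv q 1 0) ^ 2 - (vv q 0 1) ^ 2 + (vv q 1 1) ^ 2)),
     -(a * h * Real.sqrt 3 / 8) * (p * (2 * α - 1) * (vv q 0 0 - vv q 1 0));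
     a * h / 8 * (3 * p * (2 * α - 1) * (uu q 0 0 - uu q 1 0)),
     -(a * h * Real.sqrt 3 / 8) * (p * (2 * α - 1) * (vv q 0 0 - vv q 1 0)),
     0]

/-- A probability measure on `ℝ³` is the centered Gaussian law with covariance matrix `Γ`
if every linear functional pushes it to the corresponding one-dimensional Gaussian law. -/
def IsCenteredGaussian (G : Measure E) (Γ : Matrix (Fin 3) (Fin 3) ℝ) : Prop :=
  IsProbabilityMeasure G ∧
    ∀ u : Fin 3 → ℝ, G.map (fun x => ∑ r, u r * x r) =
      gaussianReal 0 (Real.toNNReal (∑ r, ∑ c, u r * Γ r c * u c))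

/-- View a point of `ℝ³` as a plain function on indices. -/
def toFun (x : E) : Fin 3 → ℝ := x

end RWG

/-! When `p = 0` every jump is horizontal and flips both lattice indices, so `S n` alternates
deterministically between `V a h 0 0` and `V a h 1 1`, and the Markov property says that the law of
`S (n + 1)` is the law of `S n` convolved with the jump law of that class. Thus `S n` is distributed
as a sum of independent steps of length `a`, and by Hoeffding its coordinates are sub-Gaussian with
variance proxy `n * a ^ 2` around the sum of the step means. Chernoff's bound and Borel–Cantelli
bound the squared distance from that centre by `O(n log n)` almost surely. Two consecutive step
means add up to `2 • (μ + ρ)`, so the centre is `n • (μ + ρ) + O(1)`; dividing by `n` gives the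
rate, and the rate gives the convergence. -/

namespace RWG

open Asymptotics

section Deterministic

lemma sum_range_ofNat_two {M : Type*} [AddCommGroup M] [Module ℝ M] (m : Fin 2 → M) (n : ℕ) :
    ∑ j ∈ Finset.range n, m (Fin.ofNat 2 j) =
      (n / 2 : ℝ) • (m 0 + m 1) + ((1 - (-1) ^ n) / 4 : ℝ) • (m 0 - m 1) := by
  induction n with
  | zero => simp
  | succ n ih =>
    have hm : m (Fin.ofNat 2 n) = (1 / 2 : ℝ) • (m 0 + m 1) + ((-1) ^ n / 2 : ℝ) • (m 0 - m 1) := by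
      obtain hn | hn := n.even_or_odd
      · rw [hn.neg_one_pow, (Fin.ext (Nat.even_iff.1 hn) : Fin.ofNat 2 n = 0)]
        module
      · rw [hn.neg_one_pow, (Fin.ext (Nat.odd_iff.1 hn) : Fin.ofNat 2 n = 1)]
        module
    rw [Finset.sum_range_succ, ih, hm, pow_succ, Nat.cast_succ]
    module

variable {G : Type*} [SeminormedAddCommGroup G] [NormedSpace ℝ G]

lemma isBigO_sum_range_ofNat_two_sub (m : Fin 2 → G) :
    (fun n : ℕ => ∑ j ∈ Finset.range n, m (Fin.ofNat 2 j) - (n : ℝ) • (1 / 2 : ℝ) • (m 0 + m 1))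
      =O[atTop] fun _ => (1 : ℝ) := by
  refine .of_bound ‖m 0 - m 1‖ (.of_forall fun n => ?_)
  have hcoeff : ‖((1 - (-1) ^ n) / 4 : ℝ)‖ ≤ 1 := by
    obtain hn | hn := neg_one_pow_eq_or ℝ n <;> norm_num [hn]
  calc ‖∑ j ∈ Finset.range n, m (Fin.ofNat 2 j) - (n : ℝ) • (1 / 2 : ℝ) • (m 0 + m 1)‖
    _ = ‖((1 - (-1) ^ n) / 4 : ℝ) • (m 0 - m 1)‖ := by
        rw [sum_range_ofNat_two]
        congr 1
        module
    _ ≤ ‖m 0 - m 1‖ := by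
        rw [norm_smul]
        exact mul_le_of_le_one_left (norm_nonneg _) hcoeff
    _ = ‖m 0 - m 1‖ * ‖(1 : ℝ)‖ := by simp

lemma isBigO_one_natCast_mul_log :
    (fun _ : ℕ => (1 : ℝ)) =O[atTop] fun n : ℕ => n * log n :=
  have hnat := tendsto_natCast_atTop_atTop (R := ℝ)
  (isLittleO_const_left.2 <| .inr <| tendsto_norm_atTop_atTop.comp <|
    hnat.atTop_mul_atTop₀ <| tendsto_log_atTop.comp hnat).isBigO

lemma isBigO_norm_inv_smul_sub_sq {x c : ℕ → G} {v : G}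
    (hx : (fun n => ‖x n - c n‖ ^ 2) =O[atTop] fun n : ℕ => n * log n)
    (hc : (fun n => c n - (n : ℝ) • v) =O[atTop] fun _ => (1 : ℝ)) :
    (fun n : ℕ => ‖(n : ℝ)⁻¹ • x n - v‖ ^ 2) =O[atTop] fun n : ℕ => log n / (n : ℝ) := by
  have hc' : (fun n => ‖c n - (n : ℝ) • v‖ ^ 2) =O[atTop] fun n : ℕ => n * log n :=
    .trans (by simpa using hc.norm_left.pow 2) isBigO_one_natCast_mul_log
  have hsum : (fun n => ‖x n - (n : ℝ) • v‖ ^ 2) =O[atTop] fun n : ℕ => n * log n := by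
    refine .trans (.of_norm_le fun n : ℕ => ?_) ((hx.add hc').const_mul_left 2)
    rw [norm_pow, norm_norm]
    calc ‖x n - (n : ℝ) • v‖ ^ 2
      _ ≤ (‖x n - c n‖ + ‖c n - (n : ℝ) • v‖) ^ 2 := by
          gcongr
          exact norm_sub_le_norm_sub_add_norm_sub ..
      _ ≤ 2 * (‖x n - c n‖ ^ 2 + ‖c n - (n : ℝ) • v‖ ^ 2) := add_sq_le
  refine ((isBigO_refl (fun n : ℕ => ((n : ℝ)⁻¹) ^ 2) atTop).mul hsum).congr' ?_ ?_
  all_goals filter_upwards [eventually_ne_atTop 0] with n hn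
  · rw [← mul_pow, ← Real.norm_of_nonneg (inv_nonneg.2 n.cast_nonneg), ← norm_smul, smul_sub,
      inv_smul_smul₀ (by positivity)]
    simp
  · field_simp

lemma tendsto_of_isBigO_norm_sub_sq {G : Type*} [SeminormedAddCommGroup G] {x : ℕ → G} {v : G}
    (hx : (fun n => ‖x n - v‖ ^ 2) =O[atTop] fun n : ℕ => log n / (n : ℝ)) :
    Tendsto x atTop (nhds v) := by
  have hlog : Tendsto (fun n : ℕ => log n / (n : ℝ)) atTop (nhds 0) :=
    Real.isLittleO_log_id_atTop.tendsto_div_nhds_zero.comp tendsto_natCast_atTop_atTop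
  rw [tendsto_iff_norm_sub_tendsto_zero]
  simpa using (hx.trans_tendsto hlog).sqrt

end Deterministic

lemma ae_conv_of_ae_ae {M : Type*} [AddMonoid M] [MeasurableSpace M] [MeasurableAdd₂ M]
    {μ ν : Measure M} [SFinite ν] {s : Set M} (hs : MeasurableSet s)
    (h : ∀ᵐ x ∂μ, ∀ᵐ y ∂ν, x + y ∈ s) : ∀ᵐ z ∂(μ ∗ ν), z ∈ s := by
  refine (ae_map_iff (by fun_prop) hs).2 ?_
  exact (Measure.ae_prod_iff_ae_ae (measurable_add hs)).2 h

section SubGaussian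

variable {Ω : Type*} [MeasurableSpace Ω] {P : Measure Ω}

lemma hasSubgaussianMGF_map_iff {Ω' : Type*} [MeasurableSpace Ω'] {Y : Ω → Ω'} {X : Ω' → ℝ}
    {c : ℝ≥0} (hY : AEMeasurable Y P) (hX : Measurable X) :
    HasSubgaussianMGF X c (P.map Y) ↔ HasSubgaussianMGF (fun ω => X (Y ω)) c P := by
  rw [← HasSubgaussianMGF.id_map_iff hX.aemeasurable,
    AEMeasurable.map_map_of_aemeasurable hX.aemeasurable hY,
    HasSubgaussianMGF.id_map_iff (hX.comp_aemeasurable hY), Function.comp_def]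

lemma measureReal_abs_ge_le_of_hasSubgaussianMGF [IsFiniteMeasure P] {X : Ω → ℝ} {c : ℝ≥0}
    (hX : HasSubgaussianMGF X c P) {ε : ℝ} (hε : 0 ≤ ε) :
    P.real {ω | ε ≤ |X ω|} ≤ 2 * exp (-ε ^ 2 / (2 * c)) := by
  have hsplit : {ω | ε ≤ |X ω|} = {ω | ε ≤ X ω} ∪ {ω | ε ≤ (-X) ω} := by
    ext ω
    simp [le_abs]
  rw [hsplit, two_mul]
  exact (measureReal_union_le _ _).trans
    (add_le_add (hX.measure_ge_le hε) (hX.neg.measure_ge_le hε))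

/- The threshold turns the Chernoff bound into `2 * n⁻²`, which Borel–Cantelli can sum. -/
lemma ae_eventually_sq_le_of_hasSubgaussianMGF [IsFiniteMeasure P] {X : ℕ → Ω → ℝ} {c : ℕ → ℝ≥0}
    (hX : ∀ n, HasSubgaussianMGF (X n) (c n) P) (hc : ∀ᶠ n in atTop, 0 < c n) :
    ∀ᵐ ω ∂P, ∀ᶠ n : ℕ in atTop, X n ω ^ 2 ≤ 4 * c n * log n := by
  let ε (n : ℕ) : ℝ := √(4 * c n * log n)
  have hε_sq (n : ℕ) : ε n ^ 2 = 4 * c n * log n :=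
    Real.sq_sqrt (mul_nonneg (by positivity) (log_natCast_nonneg n))
  have htail (n : ℕ) (hn : n ≠ 0) (hcn : 0 < c n) :
      P.real {ω | ε n ≤ |X n ω|} ≤ 2 * ((n : ℝ) ^ 2)⁻¹ := by
    have hexponent : -ε n ^ 2 / (2 * c n) = -((2 : ℕ) * log n) := by
      rw [hε_sq]
      field_simp
      push_cast
      ring
    refine (measureReal_abs_ge_le_of_hasSubgaussianMGF (hX n) (Real.sqrt_nonneg _)).trans_eq ?_
    rw [hexponent, exp_neg, exp_nat_mul, exp_log (by positivity)]
  have hsummable : Summable fun n => P.real {ω | ε n ≤ |X n ω|} := by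
    refine .of_norm_bounded_eventually_nat
      ((Real.summable_nat_pow_inv.2 one_lt_two).mul_left 2) ?_
    filter_upwards [eventually_ne_atTop 0, hc] with n hn hcn
    rw [Real.norm_of_nonneg measureReal_nonneg]
    exact htail n hn hcn
  have htsum : ∑' n, P {ω | ε n ≤ |X n ω|} ≠ ⊤ := by
    simpa [ofReal_measureReal] using hsummable.tsum_ofReal_ne_top
  filter_upwards [ae_eventually_notMem htsum] with ω hω
  filter_upwards [hω] with n hn
  rw [← hε_sq, ← sq_abs]
  gcongr
  exact (not_le.1 hn).le

lemma ae_isBigO_norm_sq_of_hasSubgaussianMGF [IsFiniteMeasure P] {ι : Type*} [Fintype ι]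
    {X : ℕ → Ω → EuclideanSpace ℝ ι} {c : ℕ → ℝ≥0}
    (hX : ∀ i n, HasSubgaussianMGF (fun ω => X n ω i) (c n) P) (hc : ∀ᶠ n in atTop, 0 < c n) :
    ∀ᵐ ω ∂P, (fun n => ‖X n ω‖ ^ 2) =O[atTop] fun n : ℕ => c n * log n := by
  filter_upwards [ae_all_iff.2 fun i => ae_eventually_sq_le_of_hasSubgaussianMGF (hX i) hc]
    with ω hω
  simp_rw [EuclideanSpace.norm_sq_eq, Real.norm_eq_abs, sq_abs]
  refine IsBigO.fun_sum fun i _ => ?_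
  refine IsBigO.of_bound 4 ?_
  filter_upwards [hω i] with n hn
  rw [mul_assoc] at hn
  rw [Real.norm_of_nonneg (sq_nonneg _)]
  exact hn.trans (by gcongr; exact Real.le_norm_self _)

variable {G : Type*} [SeminormedAddCommGroup G] [NormedSpace ℝ G] [MeasurableSpace G] [BorelSpace G]
  [SecondCountableTopology G]

lemma hasSubgaussianMGF_conv {μ ν : Measure G} [IsProbabilityMeasure μ] [IsProbabilityMeasure ν]
    {L : G →L[ℝ] ℝ} {m m' : G} {c c' : ℝ≥0} (hμ : HasSubgaussianMGF (fun x => L (x - m)) c μ)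
    (hν : HasSubgaussianMGF (fun x => L (x - m')) c' ν) :
    HasSubgaussianMGF (fun x => L (x - (m + m'))) (c + c') (μ ∗ ν) := by
  have hfst : HasSubgaussianMGF (fun z : G × G => L (z.1 - m)) c (μ.prod ν) :=
    .of_map (Y := Prod.fst) (X := fun x => L (x - m)) (by fun_prop)
      (by rwa [measurePreserving_fst.map_eq])
  have hsnd : HasSubgaussianMGF (fun z : G × G => L (z.2 - m')) c' (μ.prod ν) :=
    .of_map (Y := Prod.snd) (X := fun x => L (x - m')) (by fun_prop)
      (by rwa [measurePreserving_snd.map_eq])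
  rw [Measure.conv, hasSubgaussianMGF_map_iff (by fun_prop) (by fun_prop)]
  refine (hfst.add_of_indepFun hsnd (indepFun_prod
    (X := fun x => L (x - m)) (Y := fun x => L (x - m')) (by fun_prop) (by fun_prop))).congr ?_
  exact .of_forall fun z => by simp only [← map_add, add_sub_add_comm]

lemma hasSubgaussianMGF_sub_sum_of_map_succ_eq_conv [IsProbabilityMeasure P] {X : ℕ → Ω → G}
    {ν : ℕ → Measure G} [∀ n, IsProbabilityMeasure (ν n)] (hX : ∀ n, AEMeasurable (X n) P)
    (hX_zero : ∀ ω, X 0 ω = 0) (hX_succ : ∀ n, P.map (X (n + 1)) = P.map (X n) ∗ ν n)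
    {L : G →L[ℝ] ℝ} {m : ℕ → G} {c : ℕ → ℝ≥0}
    (hν : ∀ n, HasSubgaussianMGF (fun x => L (x - m n)) (c n) (ν n)) (n : ℕ) :
    HasSubgaussianMGF (fun ω => L (X n ω - ∑ j ∈ Finset.range n, m j))
      (∑ j ∈ Finset.range n, c j) P := by
  have hlaw (n : ℕ) (b : G) (d : ℝ≥0) := hasSubgaussianMGF_map_iff (c := d) (hX n)
    (X := fun x => L (x - b)) (by fun_prop)
  induction n with
  | zero => simp [hX_zero]
  | succ n ih =>
    have := Measure.isProbabilityMeasure_map (hX n)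
    rw [Finset.sum_range_succ, Finset.sum_range_succ, ← hlaw, hX_succ]
    exact hasSubgaussianMGF_conv ((hlaw ..).2 ih) (hν n)

end SubGaussian

section Lattice

variable {a h : ℝ} {i j i' j' : Fin 2} {x : E}

lemma vec_add_vec (x y z x' y' z' : ℝ) :
    vec x y z + vec x' y' z' = vec (x + x') (y + y') (z + z') := by
  ext r
  fin_cases r <;> rfl

lemma vec_inj {x y z x' y' z' : ℝ} : vec x y z = vec x' y' z' ↔ x = x' ∧ y = y' ∧ z = z' := by
  simp [vec]

lemma measurableSet_V (a h : ℝ) (i j : Fin 2) : MeasurableSet (V a h i j) := by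
  let vertex (m : ℤ × ℤ × ℤ) : E :=
    vec (a * ((-1 : ℝ) ^ ((i : ℕ) + 1) * (if j = 1 then (1 : ℝ) else 0) + (3 / 2) * m.1))
      (a * ((√3 / 2) * m.1 + √3 * m.2.1)) (h * (2 * m.2.2 + (if i ≠ j then (1 : ℝ) else 0)))
  refine ((countable_range vertex).mono ?_).measurableSet
  rintro _ ⟨k, l, n, rfl⟩
  exact ⟨(k, l, n), rfl⟩

lemma zero_mem_V : (0 : E) ∈ V a h 0 0 :=
  ⟨0, 0, 0, by ext r; fin_cases r <;> simp [vec]⟩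

/- In units of `h`, the parity of the third coordinate detects whether `i = j`; in units of `a / 2`,
the first coordinate modulo `3` separates `V 0 0` from `V 1 1` and `V 0 1` from `V 1 0`. -/
lemma mem_V_iff_of_mem_V (ha : a ≠ 0) (hh : h ≠ 0) (hx : x ∈ V a h i j) :
    x ∈ V a h i' j' ↔ i' = i ∧ j' = j := by
  refine ⟨?_, by rintro ⟨rfl, rfl⟩; exact hx⟩
  obtain ⟨k, l, n, rfl⟩ := hx
  rintro ⟨k', l', n', heq⟩
  obtain ⟨hfst, -, hthd⟩ := vec_inj.1 heq
  replace hfst : 2 * ((-1 : ℝ) ^ ((i : ℕ) + 1) * (if j = 1 then 1 else 0)) + 3 * k =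
      2 * ((-1 : ℝ) ^ ((i' : ℕ) + 1) * (if j' = 1 then 1 else 0)) + 3 * k' := by
    linear_combination 2 * mul_left_cancel₀ ha hfst
  replace hthd := mul_left_cancel₀ hh hthd
  norm_cast at hfst hthd
  fin_cases i <;> fin_cases j <;> fin_cases i' <;> fin_cases j' <;>
    simp at hfst hthd ⊢ <;> omega

lemma w_zero (a : ℝ) (i : Fin 2) : w a i 0 = vec ((-1) ^ (i : ℕ) * a) 0 0 := by
  simp [w, cos_nat_mul_pi, sin_nat_mul_pi, mul_comm a]

lemma w_one (a : ℝ) (i : Fin 2) :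
    w a i 1 = vec ((-1) ^ (i : ℕ) * (-a / 2)) ((-1) ^ (i : ℕ) * (a * √3 / 2)) 0 := by
  have hθ : 2 * ((1 : Fin 3) : ℕ) * π / 3 = π - π / 3 := by
    push_cast [Fin.val_one]
    ring
  rw [w, hθ, cos_add_nat_mul_pi, sin_add_nat_mul_pi, cos_pi_sub, sin_pi_sub, cos_pi_div_three,
    sin_pi_div_three, vec_inj]
  exact ⟨by ring, by ring, rfl⟩

lemma w_two (a : ℝ) (i : Fin 2) :
    w a i 2 = vec ((-1) ^ (i : ℕ) * (-a / 2)) ((-1) ^ (i : ℕ) * (-a * √3 / 2)) 0 := by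
  have hθ : 2 * ((2 : Fin 3) : ℕ) * π / 3 = π / 3 + π := by
    push_cast [Fin.val_two]
    ring
  rw [w, hθ, cos_add_nat_mul_pi, sin_add_nat_mul_pi, cos_add_pi, sin_add_pi, cos_pi_div_three,
    sin_pi_div_three, vec_inj]
  exact ⟨by ring, by ring, rfl⟩

lemma norm_w (a : ℝ) (i : Fin 2) (k : Fin 3) : ‖w a i k‖ = |a| := by
  rw [EuclideanSpace.norm_eq, ← Real.sqrt_sq_eq_abs, Fin.sum_univ_three]
  simp only [w, vec, EuclideanSpace.equiv]
  simp [mul_pow, ← mul_add]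

lemma add_w_mem_V (hx : x ∈ V a h i j) (k : Fin 3) : x + w a i k ∈ V a h (i + 1) (j + 1) := by
  obtain ⟨m, l, n, rfl⟩ := hx
  have hk : k = 0 ∨ k = 1 ∨ k = 2 := by grind
  obtain rfl | rfl | rfl := hk
  · refine ⟨m, l, n, ?_⟩
    rw [w_zero, vec_add_vec, vec_inj]
    fin_cases i <;> fin_cases j <;> refine ⟨?_, ?_, ?_⟩ <;> simp <;> ring
  · refine ⟨m - (-1) ^ (i : ℕ), l + (-1) ^ (i : ℕ), n, ?_⟩
    rw [w_one, vec_add_vec, vec_inj]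
    fin_cases i <;> fin_cases j <;> refine ⟨?_, ?_, ?_⟩ <;> simp <;> ring
  · refine ⟨m - (-1) ^ (i : ℕ), l, n, ?_⟩
    rw [w_two, vec_add_vec, vec_inj]
    fin_cases i <;> fin_cases j <;> refine ⟨?_, ?_, ?_⟩ <;> simp <;> ring

end Lattice

section StepLaw

variable {q : Fin 2 → Fin 2 → Fin 3 → ℝ} {i j : Fin 2}

/-- The law of a horizontal jump from a vertex of `V a h i j` when `p = 0`. -/
def stepLaw (a : ℝ) (q : Fin 2 → Fin 2 → Fin 3 → ℝ) (i j : Fin 2) : Measure E :=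
  ∑ k, ENNReal.ofReal (q i j k) • Measure.dirac (w a i k)

/-- The mean of a horizontal jump from a vertex of `V a h i j` when `p = 0`. -/
def stepMean (a : ℝ) (q : Fin 2 → Fin 2 → Fin 3 → ℝ) (i j : Fin 2) : E :=
  ∑ k, q i j k • w a i k

lemma isProbabilityMeasure_stepLaw (a : ℝ) (hq : ∀ k, 0 ≤ q i j k) (hsum : ∑ k, q i j k = 1) :
    IsProbabilityMeasure (stepLaw a q i j) :=
  ⟨by simp [stepLaw, ← ENNReal.ofReal_sum_of_nonneg fun k _ => hq k, hsum]⟩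

lemma ae_stepLaw_of_forall {a : ℝ} {s : E → Prop} (hs : ∀ k, s (w a i k)) :
    ∀ᵐ x ∂stepLaw a q i j, s x := by
  simp [ae_iff, stepLaw, hs]

lemma integral_stepLaw (a : ℝ) (hq : ∀ k, 0 ≤ q i j k) (f : E → ℝ) :
    ∫ x, f x ∂stepLaw a q i j = ∑ k, q i j k * f (w a i k) := by
  rw [stepLaw, integral_finsetSum_measure
    fun k _ => (integrable_dirac (by finiteness)).smul_measure ENNReal.ofReal_ne_top]
  simp [integral_smul_measure, hq]

lemma hasSubgaussianMGF_stepLaw (a : ℝ) (hq : ∀ k, 0 ≤ q i j k) (hsum : ∑ k, q i j k = 1)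
    (r : Fin 3) :
    HasSubgaussianMGF (fun x : E => (x - stepMean a q i j) r) (‖a‖₊ ^ 2) (stepLaw a q i j) := by
  have := isProbabilityMeasure_stepLaw a hq hsum
  have hmem : ∀ᵐ x ∂stepLaw a q i j, x r ∈ Icc (-|a|) |a| :=
    ae_stepLaw_of_forall fun k => abs_le.1 ((PiLp.norm_apply_le _ r).trans_eq (norm_w a i k))
  have hmean : ∫ x, x r ∂stepLaw a q i j = stepMean a q i j r := by
    simp [integral_stepLaw a hq, stepMean]
  simpa [hmean, ← two_mul] using hasSubgaussianMGF_of_mem_Icc (by fun_prop) hmem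

lemma stepMean_add_stepMean (a h α : ℝ) (hq : ∀ i, ∑ k, q i i k = 1) :
    stepMean a q 0 0 + stepMean a q 1 1 = (2 : ℝ) • (muG a h 0 α q + rhoG a 0 q) := by
  have h0 := hq 0
  have h1 := hq 1
  rw [Fin.sum_univ_three] at h0 h1
  simp only [stepMean, Fin.sum_univ_three, w_zero, w_one, w_two]
  ext r
  fin_cases r <;> simp [vec, muG, rhoG, uu, vv]
  · linear_combination a * h0 - a * h1
  · ring

end StepLaw

namespace IsRWG

variable {Ω : Type} [MeasurableSpace Ω] {P : Measure Ω} {a h α : ℝ}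
  {q : Fin 2 → Fin 2 → Fin 3 → ℝ} {S : ℕ → Ω → E} {F : ℕ → MeasurableSpace Ω}

lemma sum_q (hRW : IsRWG P a h 0 α q S F) (i j : Fin 2) : ∑ k, q i j k = 1 := by
  rw [Fin.sum_univ_three]
  fin_cases j
  · simpa using hRW.hqsum0 i
  · exact hRW.hqsum1 i

lemma F_le {p : ℝ} (hRW : IsRWG P a h p α q S F) (n : ℕ) : F n ≤ ‹MeasurableSpace Ω› := by
  rw [hRW.hF n]
  exact (measurable_pi_lambda _ fun k => (hRW.hSmeas _).sub (hRW.hSmeas _)).comap_le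

lemma condExp_comp_succ (hRW : IsRWG P a h 0 α q S F) {n : ℕ} {i j : Fin 2}
    (hV : ∀ᵐ ω ∂P, S n ω ∈ V a h i j) {f : E → ℝ} (hf : Measurable f) (hb : ∃ C, ∀ x, |f x| ≤ C) :
    P[fun ω => f (S (n + 1) ω)|F n] =ᵐ[P] fun ω => ∫ x, f (S n ω + x) ∂stepLaw a q i j := by
  filter_upwards [hRW.hTrans n f hf hb, hV] with ω hω hmem
  have hV_iff (i' j') := mem_V_iff_of_mem_V (i' := i') (j' := j') hRW.ha.ne' hRW.hh.ne' hmem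
  rw [hω, integral_stepLaw a (hRW.hq i j)]
  fin_cases i <;> fin_cases j <;> simp [indicator, hV_iff]

lemma map_succ (hRW : IsRWG P a h 0 α q S F) {n : ℕ} {i j : Fin 2}
    (hV : ∀ᵐ ω ∂P, S n ω ∈ V a h i j) :
    P.map (S (n + 1)) = P.map (S n) ∗ stepLaw a q i j := by
  have := hRW.prob
  have := isProbabilityMeasure_stepLaw a (hRW.hq i j) (hRW.sum_q i j)
  have hS (n : ℕ) := (hRW.hSmeas n).aemeasurable (μ := P)
  refine ext_of_forall_integral_eq_of_IsFiniteMeasure fun f => ?_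
  have hf := f.continuous.measurable
  calc ∫ x, f x ∂P.map (S (n + 1))
    _ = ∫ ω, f (S (n + 1) ω) ∂P := integral_map (hS _) hf.aestronglyMeasurable
    _ = ∫ ω, (P[fun ω => f (S (n + 1) ω)|F n]) ω ∂P := (integral_condExp (hRW.F_le n)).symm
    _ = ∫ ω, ∫ x, f (S n ω + x) ∂stepLaw a q i j ∂P :=
        integral_congr_ae (hRW.condExp_comp_succ hV hf ⟨‖f‖, fun x => f.norm_coe_le_norm x⟩)
    _ = ∫ y, ∫ x, f (y + x) ∂stepLaw a q i j ∂P.map (S n) := by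
        refine (integral_map (f := fun y => ∫ x, f (y + x) ∂stepLaw a q i j) (hS n) ?_).symm
        simp_rw [integral_stepLaw a (hRW.hq i j)]
        fun_prop
    _ = ∫ x, f x ∂(P.map (S n) ∗ stepLaw a q i j) := (integral_conv (f.integrable _)).symm

lemma ae_mem_V (hRW : IsRWG P a h 0 α q S F) (n : ℕ) :
    ∀ᵐ ω ∂P, S n ω ∈ V a h (Fin.ofNat 2 n) (Fin.ofNat 2 n) := by
  induction n with
  | zero => exact .of_forall fun ω => hRW.hS0 ω ▸ zero_mem_V
  | succ n ih =>
    have := hRW.prob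
    set i := Fin.ofNat 2 n
    have hi : Fin.ofNat 2 (n + 1) = i + 1 := by simp [i, Fin.ext_iff, Fin.val_add]
    have hV := measurableSet_V a h (i + 1) (i + 1)
    have hmem : ∀ᵐ x ∂P.map (S n), x ∈ V a h i i :=
      (ae_map_iff (hRW.hSmeas n).aemeasurable (measurableSet_V a h i i)).2 ih
    have := isProbabilityMeasure_stepLaw a (hRW.hq i i) (hRW.sum_q i i)
    rw [hi]
    refine (ae_map_iff (hRW.hSmeas (n + 1)).aemeasurable hV).1 ?_
    rw [hRW.map_succ ih]
    refine ae_conv_of_ae_ae hV ?_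
    filter_upwards [hmem] with x hx using ae_stepLaw_of_forall fun k => add_w_mem_V hx k

lemma hasSubgaussianMGF_apply (hRW : IsRWG P a h 0 α q S F) (r : Fin 3) (n : ℕ) :
    HasSubgaussianMGF
      (fun ω => (S n ω - ∑ j ∈ Finset.range n, stepMean a q (Fin.ofNat 2 j) (Fin.ofNat 2 j)) r)
      (n * ‖a‖₊ ^ 2) P := by
  have := hRW.prob
  have (n : ℕ) := isProbabilityMeasure_stepLaw a (hRW.hq (Fin.ofNat 2 n) (Fin.ofNat 2 n))
    (hRW.sum_q _ _)
  simpa using hasSubgaussianMGF_sub_sum_of_map_succ_eq_conv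
    (fun n => (hRW.hSmeas n).aemeasurable) hRW.hS0 (fun n => hRW.map_succ (hRW.ae_mem_V n))
    (L := EuclideanSpace.proj r)
    (fun n => hasSubgaussianMGF_stepLaw a (hRW.hq _ _) (hRW.sum_q _ _) r) n

lemma ae_isBigO_norm_inv_smul_sub_sq (hRW : IsRWG P a h 0 α q S F) :
    ∀ᵐ ω ∂P, (fun n : ℕ => ‖(n : ℝ)⁻¹ • S n ω - (muG a h 0 α q + rhoG a 0 q)‖ ^ 2)
      =O[atTop] fun n : ℕ => log n / (n : ℝ) := by
  have := hRW.prob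
  have hvar_pos : ∀ᶠ n : ℕ in atTop, 0 < (n : ℝ≥0) * ‖a‖₊ ^ 2 := by
    filter_upwards [eventually_gt_atTop 0] with n hn
    exact mul_pos (mod_cast hn) (pow_pos (nnnorm_pos.2 hRW.ha.ne') 2)
  have hvar : (fun n : ℕ => ((n * ‖a‖₊ ^ 2 : ℝ≥0) : ℝ) * log n)
      =O[atTop] fun n : ℕ => n * log n := by
    refine ((isBigO_refl (fun n : ℕ => n * log n) atTop).const_mul_left (‖a‖ ^ 2)).congr_left ?_
    intro n
    push_cast
    ring
  have hcenter := isBigO_sum_range_ofNat_two_sub fun i => stepMean a q i i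
  rw [stepMean_add_stepMean a h α fun i => hRW.sum_q i i, smul_smul,
    one_div_mul_cancel two_ne_zero, one_smul] at hcenter
  filter_upwards [ae_isBigO_norm_sq_of_hasSubgaussianMGF hRW.hasSubgaussianMGF_apply hvar_pos]
    with ω hω
  exact isBigO_norm_inv_smul_sub_sq (hω.trans hvar) hcenter

end IsRWG

end RWG

theorem rwg_slln_p_zero {Ω : Type} [MeasurableSpace Ω] (P : Measure Ω)
    (a h p α : ℝ) (q : Fin 2 → Fin 2 → Fin 3 → ℝ)
    (S : ℕ → Ω → RWG.E) (F : ℕ → MeasurableSpace Ω)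
    (hRW : RWG.IsRWG P a h p α q S F) (hp : p = 0) :
    (∀ᵐ ω ∂P, Tendsto (fun n : ℕ => (n : ℝ)⁻¹ • S n ω) atTop
      (nhds (RWG.muG a h p α q + RWG.rhoG a p q))) ∧
    (∀ᵐ ω ∂P, ∃ C > (0 : ℝ), ∃ N : ℕ, ∀ n ≥ N,
      ‖(n : ℝ)⁻¹ • S n ω - RWG.muG a h p α q - RWG.rhoG a p q‖ ^ 2 ≤
        C * Real.log n / n) := by
  subst hp
  have hrate := hRW.ae_isBigO_norm_inv_smul_sub_sq
  constructor <;> filter_upwards [hrate] with ω hω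
  · exact RWG.tendsto_of_isBigO_norm_sub_sq hω
  · obtain ⟨C, hC, hbound⟩ := hω.exists_pos
    obtain ⟨N, hN⟩ := eventually_atTop.1 hbound.bound
    refine ⟨C, hC, N, fun n hn => ?_⟩
    rw [sub_sub, mul_div_assoc]
    simpa only [Real.norm_of_nonneg (sq_nonneg _),
      Real.norm_of_nonneg (div_nonneg (log_natCast_nonneg n) n.cast_nonneg)] using hN n hn
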